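/- Let r > 0 be a real number, q ∈ (0,1) and Θ ∈ (0,1). The Markov kernel p_Θ is reversible with respect to the negative binomial NB(r,q) distribution: for all natural numbers x and z, NB(x; r, q) · p_Θ(x, z) = NB(z; r, q) · p_Θ(z, x), where NB(k; r, q) = Γ(k+r)/(k! Γ(r)) q^k (1-q)^r. -/

import Mathlib

/-- Negative binomial pmf: NB(k; r, p) = Γ(k+r)/(k! Γ(r)) · p^k (1-p)^r. -/
noncomputable def nbPMF (r p : ℝ) (k : ℕ) : ℝ :=
  Real.Gamma ((k : ℝ) + r) / ((k.factorial : ℝ) * Real.Gamma r) * p ^ k * (1 - p) ^ r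

/-- Transition kernel p_Θ(x, z) = ∑_{y=0}^{min(x,z)}
    Γ(z+r)/((z-y)! Γ(y+r)) · [q(1-Θ)]^{z-y} · [1-q(1-Θ)]^{r+y} · C(x,y) Θ^y (1-Θ)^{x-y}. -/
noncomputable def pKer (r q Θ : ℝ) (x z : ℕ) : ℝ :=
  ∑ y ∈ Finset.range (min x z + 1),
    Real.Gamma ((z : ℝ) + r) / (((z - y).factorial : ℝ) * Real.Gamma ((y : ℝ) + r)) *
      (q * (1 - Θ)) ^ (z - y) * (1 - q * (1 - Θ)) ^ (r + (y : ℝ)) *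
      (x.choose y : ℝ) * Θ ^ y * (1 - Θ) ^ (x - y)

/-!
Put `s = q (1 - Θ)`. A step of the chain from `x` thins `x` to a binomial number `y` of survivors,
then adds an independent `NB(r + y, s)` number of newcomers. If `x` is `NB(r, q)` distributed, then
`y` is `NB(r, q Θ / (1 - s))` distributed and, by Bayes' formula, `x - y` given `y` is
`NB(r + y, s)`. Thus `x` and `z` are conditionally independent and identically distributed given
`y`, so that the pair `(x, z)` is exchangeable.
-/

/-- The binomial probability mass function with `n` trials and success probability `p`, the law of
the number of survivors. It is real-valued and `p` is any real, as for `nbPMF`. -/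
def binomPMF (p : ℝ) (n k : ℕ) : ℝ :=
  n.choose k * p ^ k * (1 - p) ^ (n - k)

theorem mul_sum_mul_eq_mul_sum_mul_of_bayes {α β R : Type*} [CommSemiring R] {s : Finset β}
    {π : α → R} {ν : β → R} {T : α → β → R} {K : β → α → R} {x z : α}
    (hx : ∀ y ∈ s, π x * T x y = ν y * K y x) (hz : ∀ y ∈ s, π z * T z y = ν y * K y z) :
    π x * ∑ y ∈ s, T x y * K y z = π z * ∑ y ∈ s, T z y * K y x := by
  rw [Finset.mul_sum, Finset.mul_sum]
  refine Finset.sum_congr rfl fun y hy ↦ ?_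
  calc π x * (T x y * K y z) = ν y * K y x * K y z := by rw [← mul_assoc, hx y hy]
    _ = ν y * K y z * K y x := mul_right_comm _ _ _
    _ = π z * (T z y * K y x) := by rw [← hz y hy, mul_assoc]

theorem pKer_eq_sum_binomPMF_mul_nbPMF (r q Θ : ℝ) (x z : ℕ) :
    pKer r q Θ x z = ∑ y ∈ Finset.range (min x z + 1),
      binomPMF Θ x y * nbPMF (r + y) (q * (1 - Θ)) (z - y) := by
  refine Finset.sum_congr rfl fun y hy ↦ ?_
  have hyz : y ≤ z := (Finset.mem_range_succ_iff.mp hy).trans (min_le_right x z)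
  have hΓ : ((z - y : ℕ) : ℝ) + (r + y) = z + r := by
    rw [Nat.cast_sub hyz]
    ring
  rw [binomPMF, nbPMF, hΓ, add_comm r]
  ring

theorem gamma_natCast_add_ne_zero {r : ℝ} (hr : ∀ m : ℕ, r ≠ -m) (n : ℕ) :
    Real.Gamma (n + r) ≠ 0 := by
  refine Real.Gamma_ne_zero fun m h ↦ hr (n + m) ?_
  push_cast
  linarith

theorem gamma_ratio_mul_choose {r : ℝ} {y : ℕ} (hΓ : Real.Gamma (y + r) ≠ 0) (a : ℕ) :
    Real.Gamma ((y + a : ℕ) + r) / ((y + a).factorial * Real.Gamma r) * (y + a).choose y =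
      Real.Gamma (y + r) / (y.factorial * Real.Gamma r) *
        (Real.Gamma ((y + a : ℕ) + r) / (a.factorial * Real.Gamma (y + r))) := by
  rw [Nat.cast_add_choose ℝ]
  field_simp

theorem div_rpow_mul_rpow_natCast_add {a b : ℝ} (ha : 0 ≤ a) (hb : 0 < b) (r : ℝ) (n : ℕ) :
    (a / b) ^ r * b ^ (n + r) = a ^ r * b ^ n := by
  rw [add_comm, Real.div_rpow ha hb.le, Real.rpow_add_natCast hb.ne', ← mul_assoc,
    div_mul_cancel₀ _ (Real.rpow_pos_of_pos hb r).ne']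

theorem nbPMF_mul_binomPMF {r q Θ : ℝ} (hr : ∀ m : ℕ, r ≠ -m) (hq : q < 1)
    (hqΘ : q * (1 - Θ) < 1) {x y : ℕ} (hyx : y ≤ x) :
    nbPMF r q x * binomPMF Θ x y =
      nbPMF r (q * Θ / (1 - q * (1 - Θ))) y * nbPMF (r + y) (q * (1 - Θ)) (x - y) := by
  obtain ⟨a, rfl⟩ := Nat.exists_eq_add_of_le hyx
  set s := q * (1 - Θ) with hs
  have hs_pos : 0 < 1 - s := sub_pos.mpr hqΘ
  have hfailure : 1 - q * Θ / (1 - s) = (1 - q) / (1 - s) := by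
    rw [one_sub_div hs_pos.ne']
    congr 1
    rw [hs]
    ring
  have hcast : (a : ℝ) + (r + y) = (y + a : ℕ) + r := by
    push_cast
    ring
  have hpow : q ^ (y + a) * (Θ ^ y * (1 - Θ) ^ a) =
      (q * Θ / (1 - s)) ^ y * (1 - s) ^ y * s ^ a := by
    rw [← mul_pow, div_mul_cancel₀ _ hs_pos.ne', hs, mul_pow q (1 - Θ)]
    ring
  rw [nbPMF, nbPMF, nbPMF, binomPMF, hfailure, Nat.add_sub_cancel_left, hcast, add_comm r (y : ℝ)]
  calc
    _ = Real.Gamma ((y + a : ℕ) + r) / ((y + a).factorial * Real.Gamma r) * (y + a).choose y *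
          (q ^ (y + a) * (Θ ^ y * (1 - Θ) ^ a)) * (1 - q) ^ r := by ring
    _ = Real.Gamma (y + r) / (y.factorial * Real.Gamma r) *
          (Real.Gamma ((y + a : ℕ) + r) / (a.factorial * Real.Gamma (y + r))) *
          ((q * Θ / (1 - s)) ^ y * s ^ a) * ((1 - q) ^ r * (1 - s) ^ y) := by
      rw [gamma_ratio_mul_choose (gamma_natCast_add_ne_zero hr y), hpow]
      ring
    _ = _ := by
      rw [← div_rpow_mul_rpow_natCast_add (sub_pos.mpr hq).le hs_pos]
      ring

theorem pKer_reversible_general {r q Θ : ℝ} (hr : ∀ m : ℕ, r ≠ -m) (hq : q < 1)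
    (hqΘ : q * (1 - Θ) < 1) (x z : ℕ) :
    nbPMF r q x * pKer r q Θ x z = nbPMF r q z * pKer r q Θ z x := by
  rw [pKer_eq_sum_binomPMF_mul_nbPMF, pKer_eq_sum_binomPMF_mul_nbPMF, min_comm z x]
  refine mul_sum_mul_eq_mul_sum_mul_of_bayes (ν := nbPMF r (q * Θ / (1 - q * (1 - Θ))))
    (K := fun y z ↦ nbPMF (r + y) (q * (1 - Θ)) (z - y)) (fun y hy ↦ ?_) (fun y hy ↦ ?_)
  · exact nbPMF_mul_binomPMF hr hq hqΘ
      ((Finset.mem_range_succ_iff.mp hy).trans (min_le_left x z))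
  · exact nbPMF_mul_binomPMF hr hq hqΘ
      ((Finset.mem_range_succ_iff.mp hy).trans (min_le_right x z))

/-- The kernel p_Θ is reversible with respect to the NB(r,q) distribution:
    NB(x; r, q) · p_Θ(x, z) = NB(z; r, q) · p_Θ(z, x). -/
theorem pKer_reversible
    (r q Θ : ℝ) (hr : 0 < r) (hq : q ∈ Set.Ioo (0 : ℝ) 1) (hΘ : Θ ∈ Set.Ioo (0 : ℝ) 1)
    (x z : ℕ) :
    nbPMF r q x * pKer r q Θ x z = nbPMF r q z * pKer r q Θ z x :=
  pKer_reversible_general (fun m ↦ by linarith [m.cast_nonneg (α := ℝ)])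
    hq.2 (by linarith [hq.2, mul_pos hq.1 hΘ.1]) x z
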